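/- (Derivative of the Fisher information) For every a > 0, the Fisher information J(a) = ∫ f_Y(y;a) S_Y(y;a)² dy of the output of the additive Gaussian noise channel is differentiable in a and d/da J(a) = −∫ f_Y(y;a) (∂/∂y S_Y(y;a))² dy, where S_Y(y;a) = ∂/∂y log f_Y(y;a). -/

import Mathlib

open MeasureTheory Filter

/-!
Write `r k = E[(Y - X) ^ k | Y]`. The score is `S = -r 1 / a` (Tweedie's formula), and since `f_Y`
solves the heat equation `∂_a f = ∂_y² f / 2`, the Fisher information density satisfies the
conservation law `∂_a (f S²) + f (∂_y S)² = ∂_y (f (S ∂_y S + S³ / 2))`, whose right-hand side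
integrates to zero. Conditional Jensen, `(r k)² ≤ r (2 k)`, bounds all terms by the even moments
`f * r (2 k)`, which need no moments of `X`: they are convolutions of the law of `X` with
`u ^ (2 k)` times the Gaussian kernel, dominated locally uniformly in `a` by the convolution with a
Cauchy profile.
-/

open scoped Topology

section Calculus

lemma integrable_integral_comp_sub {G E : Type*} [AddGroup G] [MeasurableSpace G] [MeasurableAdd₂ G]
    [MeasurableNeg G] [NormedAddCommGroup E] [NormedSpace ℝ E] {ν μ : Measure G} [SFinite ν]
    [ν.IsAddRightInvariant] [IsFiniteMeasure μ] {φ : G → E} (hφ : Integrable φ ν) :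
    Integrable (fun y => ∫ x, φ (y - x) ∂μ) ν :=
  ((measurePreserving_sub_prod ν μ).integrable_comp_of_integrable
    (hφ.comp_fst μ)).integral_prod_left

lemma hasDerivAt_integral_comp_sub {E : Type*} [NormedAddCommGroup E] [NormedSpace ℝ E]
    [CompleteSpace E] {μ : Measure ℝ} [IsFiniteMeasure μ] {φ φ' : ℝ → E} {C y : ℝ}
    (hφ : ∀ u, HasDerivAt φ (φ' u) u) (hφ' : ∀ u, ‖φ' u‖ ≤ C)
    (hint : Integrable (fun x => φ (y - x)) μ) :
    HasDerivAt (fun y => ∫ x, φ (y - x) ∂μ) (∫ x, φ' (y - x) ∂μ) y := by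
  have hcont : Continuous φ := continuous_iff_continuousAt.2 fun u => (hφ u).continuousAt
  have hmeas : StronglyMeasurable φ' := by
    rw [← funext fun u => (hφ u).deriv]
    exact stronglyMeasurable_deriv φ
  refine (hasDerivAt_integral_of_dominated_loc_of_deriv_le (F := fun y x => φ (y - x))
    (F' := fun y x => φ' (y - x)) univ_mem (.of_forall fun z => ?_) hint ?_
    (.of_forall fun x z _ => hφ' (z - x)) (integrable_const C)
    (.of_forall fun x z _ => (hφ (z - x)).comp_sub_const z x)).2
  · exact Continuous.aestronglyMeasurable (by fun_prop)
  · exact (hmeas.comp_measurable (by fun_prop)).aestronglyMeasurable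

lemma sq_integral_mul_le {α : Type*} [MeasurableSpace α] {μ : Measure α} {p w : α → ℝ}
    (hw : 0 ≤ᵐ[μ] w) (hw_int : Integrable w μ) (hpw : Integrable (fun x => p x * w x) μ)
    (hppw : Integrable (fun x => p x ^ 2 * w x) μ) :
    (∫ x, p x * w x ∂μ) ^ 2 ≤ (∫ x, w x ∂μ) * ∫ x, p x ^ 2 * w x ∂μ := by
  have quadratic_nonneg (t : ℝ) : 0 ≤ (∫ x, w x ∂μ) * (t * t) + 2 * (∫ x, p x * w x ∂μ) * t +
      ∫ x, p x ^ 2 * w x ∂μ := by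
    calc 0 ≤ ∫ x, (t + p x) ^ 2 * w x ∂μ :=
          integral_nonneg_of_ae (hw.mono fun x hx => mul_nonneg (sq_nonneg _) hx)
      _ = ∫ x, (t * t * w x + 2 * t * (p x * w x) + p x ^ 2 * w x) ∂μ := by
          congr with x; ring
      _ = _ := by
          rw [integral_add ((hw_int.const_mul _).fun_add (hpw.const_mul _)) hppw,
            integral_add (hw_int.const_mul _) (hpw.const_mul _), integral_const_mul,
            integral_const_mul]
          ring
  have := discrim_le_zero quadratic_nonneg
  rw [discrim] at this
  linarith

lemma isProbabilityMeasure_withDensity_ofReal {α : Type*} [MeasurableSpace α] {ν : Measure α}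
    {f : α → ℝ} (hf : 0 ≤ᵐ[ν] f) (hf_one : ∫ x, f x ∂ν = 1) :
    IsProbabilityMeasure (ν.withDensity fun x => ENNReal.ofReal (f x)) where
  measure_univ := by
    have hf_int : Integrable f ν := .of_integral_ne_zero (by simp [hf_one])
    rw [withDensity_apply _ .univ, Measure.restrict_univ,
      ← ofReal_integral_eq_lintegral_ofReal hf_int hf, hf_one, ENNReal.ofReal_one]

lemma integral_withDensity_ofReal {α : Type*} [MeasurableSpace α] {ν : Measure α}
    {f : α → ℝ} (hf : 0 ≤ᵐ[ν] f) (hf_meas : AEMeasurable f ν) (g : α → ℝ) :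
    ∫ x, g x ∂ν.withDensity (fun x => ENNReal.ofReal (f x)) = ∫ x, f x * g x ∂ν := by
  rw [integral_withDensity_eq_integral_toReal_smul₀ hf_meas.ennreal_ofReal (by simp)]
  refine integral_congr_ae (hf.mono fun x hx => ?_)
  simp only [ENNReal.toReal_ofReal hx, smul_eq_mul]

end Calculus

section GaussianKernel

/-- The density of the centred Gaussian of variance `b`. The variance is a real number, rather than
an element of `ℝ≥0` as in `ProbabilityTheory.gaussianPDFReal`, so that one can differentiate in
it. -/
noncomputable def gaussianKernel (b u : ℝ) : ℝ :=
  (√(2 * Real.pi * b))⁻¹ * Real.exp (-u ^ 2 / (2 * b))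

lemma gaussianKernel_pos {b : ℝ} (hb : 0 < b) (u : ℝ) : 0 < gaussianKernel b u := by
  unfold gaussianKernel
  positivity

@[fun_prop]
lemma continuous_gaussianKernel (b : ℝ) : Continuous (gaussianKernel b) := by
  unfold gaussianKernel
  fun_prop

lemma hasDerivAt_gaussianKernel (b u : ℝ) :
    HasDerivAt (gaussianKernel b) (-(b⁻¹ * u) * gaussianKernel b u) u := by
  have exponent : HasDerivAt (fun u : ℝ => -u ^ 2 / (2 * b)) (-(b⁻¹ * u)) u :=
    ((hasDerivAt_pow 2 u).fun_neg.div_const (2 * b)).congr_deriv (by push_cast; ring)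
  exact (exponent.exp.const_mul (√(2 * Real.pi * b))⁻¹).congr_deriv (by
    unfold gaussianKernel; ring)

lemma hasDerivAt_gaussianKernel_variance {b : ℝ} (hb : 0 < b) (u : ℝ) :
    HasDerivAt (fun b => gaussianKernel b u)
      ((b⁻¹ ^ 2 * u ^ 2 - b⁻¹) / 2 * gaussianKernel b u) b := by
  have exponent : HasDerivAt (fun b : ℝ => -u ^ 2 / (2 * b)) (b⁻¹ ^ 2 * u ^ 2 / 2) b := by
    refine ((hasDerivAt_const b (-u ^ 2)).fun_div ((hasDerivAt_id b).const_mul 2)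
      (by simpa using hb.ne')).congr_deriv ?_
    simp only [id]
    field_simp
    ring
  have normalization :
      HasDerivAt (fun b : ℝ => (√(2 * Real.pi * b))⁻¹) (-b⁻¹ / 2 * (√(2 * Real.pi * b))⁻¹) b := by
    have radicand_pos : 0 < 2 * Real.pi * b := by positivity
    refine ((((hasDerivAt_id b).const_mul (2 * Real.pi)).sqrt radicand_pos.ne').fun_inv
      (Real.sqrt_pos.2 radicand_pos).ne').congr_deriv ?_
    simp only [id, Real.sq_sqrt radicand_pos.le]
    field_simp
  exact (normalization.mul exponent.exp).congr_deriv (by unfold gaussianKernel; ring)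

lemma hasDerivAt_pow_mul_gaussianKernel (k : ℕ) (b u : ℝ) :
    HasDerivAt (fun u => u ^ k * gaussianKernel b u)
      (k * (u ^ (k - 1) * gaussianKernel b u) - b⁻¹ * (u ^ (k + 1) * gaussianKernel b u)) u :=
  ((hasDerivAt_pow k u).fun_mul (hasDerivAt_gaussianKernel b u)).congr_deriv (by ring)

lemma hasDerivAt_pow_mul_gaussianKernel_variance (k : ℕ) {b : ℝ} (hb : 0 < b) (u : ℝ) :
    HasDerivAt (fun b => u ^ k * gaussianKernel b u)
      ((b⁻¹ ^ 2 * (u ^ (k + 2) * gaussianKernel b u) - b⁻¹ * (u ^ k * gaussianKernel b u)) / 2) b :=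
  ((hasDerivAt_gaussianKernel_variance hb u).const_mul (u ^ k)).congr_deriv (by ring)

lemma pow_mul_exp_neg_mul_le (n : ℕ) {c t : ℝ} (hc : 0 < c) (ht : 0 ≤ t) :
    t ^ n * Real.exp (-(c * t)) ≤ n.factorial / c ^ n := by
  have := Real.pow_div_factorial_le_exp (c * t) (by positivity) n
  rw [Real.exp_neg, ← div_eq_mul_inv, div_le_div_iff₀ (by positivity) (by positivity)]
  rw [div_le_iff₀ (by positivity), mul_pow] at this
  linarith

lemma gaussianKernel_le {l b r : ℝ} (hl : 0 < l) (hlb : l ≤ b) (hbr : b ≤ r) (u : ℝ) :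
    gaussianKernel b u ≤ (√(2 * Real.pi * l))⁻¹ * Real.exp (-u ^ 2 / (2 * r)) := by
  have hb : 0 < b := hl.trans_le hlb
  rw [gaussianKernel, neg_div, neg_div]
  gcongr

lemma exists_eventually_abs_pow_mul_gaussianKernel_le (k : ℕ) {a : ℝ} (ha : 0 < a) :
    ∃ K, ∀ᶠ b in 𝓝 a, ∀ u, |u ^ k * gaussianKernel b u| ≤ K * (1 + u ^ 2)⁻¹ := by
  set c := 1 / (4 * a) with hc
  refine ⟨(√(2 * Real.pi * (a / 2)))⁻¹ * (Real.exp c * ((k + 1).factorial / c ^ (k + 1))), ?_⟩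
  filter_upwards [Icc_mem_nhds (show a / 2 < a by linarith) (show a < 2 * a by linarith)]
    with b ⟨hab, hba⟩ u
  have hb : 0 < b := by linarith
  have abs_le : |u| ≤ 1 + u ^ 2 := by
    rw [_root_.abs_le]; constructor <;> nlinarith [sq_nonneg (u - 1), sq_nonneg (u + 1)]
  have exp_shift :
      Real.exp (-u ^ 2 / (2 * (2 * a))) = Real.exp c * Real.exp (-(c * (1 + u ^ 2))) := by
    rw [← Real.exp_add, hc]; congr 1; ring
  rw [abs_mul, abs_pow, abs_of_pos (gaussianKernel_pos hb u), ← div_eq_mul_inv,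
    le_div_iff₀ (by positivity)]
  calc |u| ^ k * gaussianKernel b u * (1 + u ^ 2)
    _ ≤ (1 + u ^ 2) ^ k * ((√(2 * Real.pi * (a / 2)))⁻¹ * Real.exp (-u ^ 2 / (2 * (2 * a)))) *
          (1 + u ^ 2) := by
        gcongr
        · exact (gaussianKernel_pos hb u).le
        · exact gaussianKernel_le (by positivity) hab hba u
    _ = (√(2 * Real.pi * (a / 2)))⁻¹ *
          (Real.exp c * ((1 + u ^ 2) ^ (k + 1) * Real.exp (-(c * (1 + u ^ 2))))) := by
        rw [exp_shift]; ring
    _ ≤ _ := by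
        gcongr
        exact pow_mul_exp_neg_mul_le (k + 1) (by positivity) (by positivity)

lemma exists_eventually_abs_mul_pow_mul_gaussianKernel_le (k : ℕ) {a : ℝ} (ha : 0 < a)
    {c : ℝ → ℝ} (hc : ContinuousAt c a) :
    ∃ K, ∀ᶠ b in 𝓝 a, ∀ u, |c b * (u ^ k * gaussianKernel b u)| ≤ K * (1 + u ^ 2)⁻¹ := by
  obtain ⟨K, hK⟩ := exists_eventually_abs_pow_mul_gaussianKernel_le k ha
  refine ⟨(|c a| + 1) * K, ?_⟩
  filter_upwards [hK, hc.abs.eventually_lt_const (lt_add_one |c a|)] with b hKb hcb u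
  rw [abs_mul, mul_assoc]
  gcongr
  exact hKb u

lemma exists_eventually_abs_mul_pow_mul_gaussianKernel_le_const (k : ℕ) {a : ℝ} (ha : 0 < a)
    {c : ℝ → ℝ} (hc : ContinuousAt c a) :
    ∃ K, ∀ᶠ b in 𝓝 a, ∀ u, |c b * (u ^ k * gaussianKernel b u)| ≤ K := by
  obtain ⟨K, hK⟩ := exists_eventually_abs_mul_pow_mul_gaussianKernel_le k ha hc
  refine ⟨K, hK.mono fun b hb u => (hb u).trans ?_⟩
  have K_nonneg : 0 ≤ K := by simpa using (abs_nonneg _).trans (hb 0)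
  exact mul_le_of_le_one_right K_nonneg (inv_le_one_of_one_le₀ (by nlinarith [sq_nonneg u]))

end GaussianKernel

section Moments

/-- `kernelMoment μ k b y` is `f_Y(y) E[(Y - X) ^ k | Y = y]`, where `X` has law `μ` and `f_Y` is
the density of `Y = X + √b W`; in particular `kernelMoment μ 0 b = f_Y`. -/
noncomputable def kernelMoment (μ : Measure ℝ) (k : ℕ) (b y : ℝ) : ℝ :=
  ∫ x, (y - x) ^ k * gaussianKernel b (y - x) ∂μ

/-- `condMoment μ k b y` is the conditional moment `E[(Y - X) ^ k | Y = y]`, where `X` has law `μ`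
and `Y = X + √b W`. -/
noncomputable def condMoment (μ : Measure ℝ) (k : ℕ) (b y : ℝ) : ℝ :=
  kernelMoment μ k b y / kernelMoment μ 0 b y

variable (μ : Measure ℝ) [IsFiniteMeasure μ] {b : ℝ}

lemma integrable_pow_mul_gaussianKernel_sub (k : ℕ) (hb : 0 < b) (y : ℝ) :
    Integrable (fun x => (y - x) ^ k * gaussianKernel b (y - x)) μ := by
  obtain ⟨K, hK⟩ := exists_eventually_abs_mul_pow_mul_gaussianKernel_le_const k hb
    (continuousAt_const (y := 1))
  exact .of_bound (Continuous.aestronglyMeasurable (by fun_prop)) K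
    (.of_forall fun x => by simpa using hK.self_of_nhds (y - x))

lemma hasDerivAt_kernelMoment (k : ℕ) (hb : 0 < b) (y : ℝ) :
    HasDerivAt (kernelMoment μ k b)
      (k * kernelMoment μ (k - 1) b y - b⁻¹ * kernelMoment μ (k + 1) b y) y := by
  obtain ⟨K, hK⟩ := exists_eventually_abs_mul_pow_mul_gaussianKernel_le_const (k - 1) hb
    (continuousAt_const (y := (k : ℝ)))
  obtain ⟨L, hL⟩ := exists_eventually_abs_mul_pow_mul_gaussianKernel_le_const (k + 1) hb
    (continuousAt_inv₀ hb.ne')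
  have hint := fun k => integrable_pow_mul_gaussianKernel_sub μ k hb y
  refine (hasDerivAt_integral_comp_sub (hasDerivAt_pow_mul_gaussianKernel k b)
    (fun u => norm_sub_le_of_le (hK.self_of_nhds u) (hL.self_of_nhds u)) (hint k)).congr_deriv ?_
  rw [integral_sub ((hint (k - 1)).const_mul _) ((hint (k + 1)).const_mul _),
    integral_const_mul, integral_const_mul, kernelMoment, kernelMoment]

lemma continuous_kernelMoment (k : ℕ) (hb : 0 < b) : Continuous (kernelMoment μ k b) :=
  continuous_iff_continuousAt.2 fun y => (hasDerivAt_kernelMoment μ k hb y).continuousAt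

lemma hasDerivAt_kernelMoment_variance (k : ℕ) (hb : 0 < b) (y : ℝ) :
    HasDerivAt (fun b => kernelMoment μ k b y)
      ((b⁻¹ ^ 2 * kernelMoment μ (k + 2) b y - b⁻¹ * kernelMoment μ k b y) / 2) b := by
  obtain ⟨K, hK⟩ := exists_eventually_abs_mul_pow_mul_gaussianKernel_le_const (k + 2) hb
    ((continuousAt_inv₀ hb.ne').pow 2)
  obtain ⟨L, hL⟩ := exists_eventually_abs_mul_pow_mul_gaussianKernel_le_const k hb
    (continuousAt_inv₀ hb.ne')
  have hint := fun k => integrable_pow_mul_gaussianKernel_sub μ k hb y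
  refine (hasDerivAt_integral_of_dominated_loc_of_deriv_le
    (bound := fun _ => (K + L) / 2) (hK.and (hL.and (lt_mem_nhds hb)))
    (.of_forall fun c => Continuous.aestronglyMeasurable (by fun_prop)) (hint k)
    (Continuous.aestronglyMeasurable (by fun_prop))
    (.of_forall fun x c ⟨hKc, hLc, _⟩ => ?_) (integrable_const _)
    (.of_forall fun x c ⟨_, _, hc⟩ =>
      hasDerivAt_pow_mul_gaussianKernel_variance k hc (y - x))).2.congr_deriv ?_
  · rw [norm_div, Real.norm_two]
    gcongr
    exact norm_sub_le_of_le (hKc (y - x)) (hLc (y - x))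
  · rw [integral_div, integral_sub ((hint (k + 2)).const_mul _) ((hint k).const_mul _),
      integral_const_mul, integral_const_mul, kernelMoment, kernelMoment]

lemma sq_kernelMoment_le (k : ℕ) (hb : 0 < b) (y : ℝ) :
    kernelMoment μ k b y ^ 2 ≤ kernelMoment μ 0 b y * kernelMoment μ (2 * k) b y := by
  have hint := fun k => integrable_pow_mul_gaussianKernel_sub μ k hb y
  simpa only [kernelMoment, pow_zero, one_mul, pow_mul'] using
    sq_integral_mul_le (.of_forall fun x => (gaussianKernel_pos hb (y - x)).le)
      (by simpa using hint 0) (hint k) (by simpa only [pow_mul'] using hint (2 * k))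

lemma exists_integrable_bound_kernelMoment (k : ℕ) {a : ℝ} (ha : 0 < a) {c : ℝ → ℝ}
    (hc : ContinuousAt c a) :
    ∃ T, Integrable T ∧ ∀ᶠ b in 𝓝 a, ∀ y, |c b * kernelMoment μ k b y| ≤ T y := by
  obtain ⟨K, hK⟩ := exists_eventually_abs_mul_pow_mul_gaussianKernel_le k ha hc
  refine ⟨fun y => ∫ x, K * (1 + (y - x) ^ 2)⁻¹ ∂μ,
    integrable_integral_comp_sub (integrable_inv_one_add_sq.const_mul K), ?_⟩
  filter_upwards [hK] with b hKb y
  have K_nonneg : 0 ≤ K := by simpa using (abs_nonneg _).trans (hKb 0)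
  have bound_integrable : Integrable (fun x => K * (1 + (y - x) ^ 2)⁻¹) μ := by
    refine .of_bound (AEMeasurable.aestronglyMeasurable (by fun_prop)) K (.of_forall fun x => ?_)
    rw [Real.norm_of_nonneg (by positivity)]
    exact mul_le_of_le_one_right K_nonneg
      (inv_le_one_of_one_le₀ (by nlinarith [sq_nonneg (y - x)]))
  rw [kernelMoment, ← integral_const_mul, ← Real.norm_eq_abs]
  exact norm_integral_le_of_norm_le bound_integrable (.of_forall fun x => hKb (y - x))

lemma integrable_kernelMoment (k : ℕ) (hb : 0 < b) : Integrable (kernelMoment μ k b) := by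
  obtain ⟨T, hT, hbound⟩ := exists_integrable_bound_kernelMoment μ k hb
    (continuousAt_const (y := (1 : ℝ)))
  exact hT.mono' (continuous_kernelMoment μ k hb).aestronglyMeasurable
    (.of_forall fun y => by simpa using hbound.self_of_nhds y)

variable [NeZero μ]

lemma kernelMoment_zero_pos (hb : 0 < b) (y : ℝ) : 0 < kernelMoment μ 0 b y := by
  have integrand_pos (x : ℝ) : 0 < (y - x) ^ 0 * gaussianKernel b (y - x) := by
    simpa using gaussianKernel_pos hb (y - x)
  refine (integral_pos_iff_support_of_nonneg (fun x => (integrand_pos x).le)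
    (integrable_pow_mul_gaussianKernel_sub μ 0 hb y)).2 ?_
  rw [Function.support_eq_univ fun x => (integrand_pos x).ne']
  exact Measure.measure_univ_pos.2 (NeZero.ne μ)

lemma kernelMoment_eq_mul_condMoment (k : ℕ) (hb : 0 < b) (y : ℝ) :
    kernelMoment μ k b y = kernelMoment μ 0 b y * condMoment μ k b y :=
  (mul_div_cancel₀ _ (kernelMoment_zero_pos μ hb y).ne').symm

lemma condMoment_zero (hb : 0 < b) (y : ℝ) : condMoment μ 0 b y = 1 :=
  div_self (kernelMoment_zero_pos μ hb y).ne'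

lemma continuous_condMoment (k : ℕ) (hb : 0 < b) : Continuous (condMoment μ k b) :=
  (continuous_kernelMoment μ k hb).div (continuous_kernelMoment μ 0 hb)
    fun y => (kernelMoment_zero_pos μ hb y).ne'

lemma sq_condMoment_le (k : ℕ) (hb : 0 < b) (y : ℝ) :
    condMoment μ k b y ^ 2 ≤ condMoment μ (2 * k) b y := by
  have hpos := kernelMoment_zero_pos μ hb y
  rw [condMoment, condMoment, div_pow, div_le_div_iff₀ (by positivity) hpos]
  nlinarith [sq_kernelMoment_le μ k hb y]

lemma hasDerivAt_kernelMoment_zero (hb : 0 < b) (y : ℝ) :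
    HasDerivAt (kernelMoment μ 0 b) (-b⁻¹ * (kernelMoment μ 0 b y * condMoment μ 1 b y)) y := by
  refine (hasDerivAt_kernelMoment μ 0 hb y).congr_deriv ?_
  rw [← kernelMoment_eq_mul_condMoment μ 1 hb]
  simp

lemma hasDerivAt_kernelMoment_zero_variance (hb : 0 < b) (y : ℝ) :
    HasDerivAt (fun b => kernelMoment μ 0 b y)
      (kernelMoment μ 0 b y * (b⁻¹ ^ 2 * condMoment μ 2 b y - b⁻¹) / 2) b := by
  refine (hasDerivAt_kernelMoment_variance μ 0 hb y).congr_deriv ?_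
  rw [kernelMoment_eq_mul_condMoment μ (0 + 2) hb]
  ring

lemma hasDerivAt_condMoment (k : ℕ) (hb : 0 < b) (y : ℝ) :
    HasDerivAt (condMoment μ k b)
      (k * condMoment μ (k - 1) b y -
        b⁻¹ * (condMoment μ (k + 1) b y - condMoment μ 1 b y * condMoment μ k b y)) y := by
  have hne := (kernelMoment_zero_pos μ hb y).ne'
  refine ((hasDerivAt_kernelMoment μ k hb y).div (hasDerivAt_kernelMoment_zero μ hb y)
    hne).congr_deriv ?_
  unfold condMoment
  field_simp
  ring

lemma hasDerivAt_condMoment_variance (k : ℕ) (hb : 0 < b) (y : ℝ) :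
    HasDerivAt (fun b => condMoment μ k b y)
      (b⁻¹ ^ 2 * (condMoment μ (k + 2) b y - condMoment μ 2 b y * condMoment μ k b y) / 2) b := by
  have hne := (kernelMoment_zero_pos μ hb y).ne'
  refine ((hasDerivAt_kernelMoment_variance μ k hb y).fun_div
    (hasDerivAt_kernelMoment_zero_variance μ hb y) hne).congr_deriv ?_
  unfold condMoment
  field_simp
  ring

/-- Tweedie's formula. -/
lemma deriv_log_kernelMoment_zero (hb : 0 < b) (y : ℝ) :
    deriv (fun y => Real.log (kernelMoment μ 0 b y)) y = -b⁻¹ * condMoment μ 1 b y := by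
  have hpos := kernelMoment_zero_pos μ hb y
  rw [((hasDerivAt_kernelMoment_zero μ hb y).log hpos.ne').deriv]
  field_simp

lemma deriv_deriv_log_kernelMoment_zero (hb : 0 < b) (y : ℝ) :
    deriv (fun y => deriv (fun y => Real.log (kernelMoment μ 0 b y)) y) y =
      b⁻¹ ^ 2 * (condMoment μ 2 b y - condMoment μ 1 b y ^ 2) - b⁻¹ := by
  simp only [deriv_log_kernelMoment_zero μ hb]
  rw [((hasDerivAt_condMoment μ 1 hb y).const_mul (-b⁻¹)).deriv, condMoment_zero μ hb]
  push_cast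
  ring

end Moments

section FisherInformation

/-- The Fisher information density `f_Y S_Y²`, with `S_Y` expressed by Tweedie's formula. -/
noncomputable def fisherDensity (μ : Measure ℝ) (b y : ℝ) : ℝ :=
  kernelMoment μ 0 b y * (b⁻¹ * condMoment μ 1 b y) ^ 2

/-- The derivative in `b` of the Fisher information density `fisherDensity μ b y`. -/
noncomputable def fisherDensityDeriv (μ : Measure ℝ) (b y : ℝ) : ℝ :=
  kernelMoment μ 0 b y * (b⁻¹ ^ 4 * (condMoment μ 1 b y * condMoment μ 3 b y -
    condMoment μ 1 b y ^ 2 * condMoment μ 2 b y / 2) - 5 / 2 * b⁻¹ ^ 3 * condMoment μ 1 b y ^ 2)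

/-- The flux `f_Y (S_Y ∂_y S_Y + S_Y³ / 2)` of the Fisher information density: its divergence is
`fisherDensityDeriv` plus the dissipation `f_Y (∂_y S_Y)²`. -/
noncomputable def fisherFlux (μ : Measure ℝ) (b y : ℝ) : ℝ :=
  kernelMoment μ 0 b y * (b⁻¹ ^ 2 * condMoment μ 1 b y - b⁻¹ ^ 3 * (condMoment μ 1 b y *
    condMoment μ 2 b y) + b⁻¹ ^ 3 * condMoment μ 1 b y ^ 3 / 2)

/-- The dissipation `f_Y (∂_y S_Y)²` of the Fisher information. -/
noncomputable def fisherDissipation (μ : Measure ℝ) (b y : ℝ) : ℝ :=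
  kernelMoment μ 0 b y *
    (b⁻¹ ^ 2 * (condMoment μ 2 b y - condMoment μ 1 b y ^ 2) - b⁻¹) ^ 2

variable (μ : Measure ℝ) [IsFiniteMeasure μ] [NeZero μ] {b : ℝ}

lemma hasDerivAt_fisherDensity (hb : 0 < b) (y : ℝ) :
    HasDerivAt (fun b => fisherDensity μ b y) (fisherDensityDeriv μ b y) b := by
  refine ((hasDerivAt_kernelMoment_zero_variance μ hb y).fun_mul
    (((hasDerivAt_inv hb.ne').fun_mul
      (hasDerivAt_condMoment_variance μ 1 hb y)).fun_pow 2)).congr_deriv ?_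
  unfold fisherDensityDeriv
  push_cast
  ring

lemma hasDerivAt_fisherFlux (hb : 0 < b) (y : ℝ) :
    HasDerivAt (fisherFlux μ b) (fisherDensityDeriv μ b y + fisherDissipation μ b y) y := by
  have deriv_one := hasDerivAt_condMoment μ 1 hb y
  have deriv_two := hasDerivAt_condMoment μ 2 hb y
  refine ((hasDerivAt_kernelMoment_zero μ hb y).fun_mul
    (((deriv_one.const_mul _).fun_sub ((deriv_one.fun_mul deriv_two).const_mul _)).fun_add
      (((deriv_one.fun_pow 3).const_mul _).div_const 2))).congr_deriv ?_
  rw [fisherDensityDeriv, fisherDissipation, condMoment_zero μ hb]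
  push_cast
  ring

lemma abs_fisherDensityDeriv_le (hb : 0 < b) (y : ℝ) :
    |fisherDensityDeriv μ b y| ≤ (b⁻¹ ^ 4 / 2 + 5 / 2 * b⁻¹ ^ 3) * kernelMoment μ 2 b y +
      b⁻¹ ^ 4 / 2 * kernelMoment μ 4 b y + b⁻¹ ^ 4 / 2 * kernelMoment μ 6 b y := by
  have hm := kernelMoment_zero_pos μ hb y
  rw [fisherDensityDeriv, abs_mul, abs_of_pos hm, kernelMoment_eq_mul_condMoment μ 2 hb,
    kernelMoment_eq_mul_condMoment μ 4 hb, kernelMoment_eq_mul_condMoment μ 6 hb]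
  have sq_one : condMoment μ 1 b y ^ 2 ≤ condMoment μ 2 b y := sq_condMoment_le μ 1 hb y
  have sq_two : condMoment μ 2 b y ^ 2 ≤ condMoment μ 4 b y := sq_condMoment_le μ 2 hb y
  have sq_three : condMoment μ 3 b y ^ 2 ≤ condMoment μ 6 b y := sq_condMoment_le μ 3 hb y
  generalize condMoment μ 1 b y = r₁ at *
  generalize condMoment μ 2 b y = r₂ at *
  generalize condMoment μ 3 b y = r₃ at *
  generalize condMoment μ 4 b y = r₄ at *
  generalize condMoment μ 6 b y = r₆ at *
  have quartic_nonneg : 0 ≤ r₁ ^ 2 * r₂ := by nlinarith [sq_nonneg r₁]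
  have quartic_le : r₁ ^ 2 * r₂ ≤ r₄ := by nlinarith [sq_nonneg r₁]
  have abs_le : |r₁ * r₃ - r₁ ^ 2 * r₂ / 2| ≤ (r₂ + r₄ + r₆) / 2 := by
    rw [_root_.abs_le]
    constructor <;> nlinarith [sq_nonneg (r₁ - r₃), sq_nonneg (r₁ + r₃)]
  calc kernelMoment μ 0 b y * |b⁻¹ ^ 4 * (r₁ * r₃ - r₁ ^ 2 * r₂ / 2) - 5 / 2 * b⁻¹ ^ 3 * r₁ ^ 2|
    _ ≤ kernelMoment μ 0 b y *
          (b⁻¹ ^ 4 * |r₁ * r₃ - r₁ ^ 2 * r₂ / 2| + 5 / 2 * b⁻¹ ^ 3 * r₁ ^ 2) := by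
        gcongr
        refine (abs_sub _ _).trans_eq ?_
        rw [abs_mul, abs_of_pos (by positivity : 0 < b⁻¹ ^ 4),
          abs_of_nonneg (by positivity : 0 ≤ 5 / 2 * b⁻¹ ^ 3 * r₁ ^ 2)]
    _ ≤ kernelMoment μ 0 b y * (b⁻¹ ^ 4 * ((r₂ + r₄ + r₆) / 2) + 5 / 2 * b⁻¹ ^ 3 * r₂) := by
        gcongr
    _ = _ := by ring

lemma exists_integrable_bound_fisherDensityDeriv {a : ℝ} (ha : 0 < a) :
    ∃ T, Integrable T ∧ ∀ᶠ b in 𝓝 a, ∀ y, |fisherDensityDeriv μ b y| ≤ T y := by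
  have inv_cont : ContinuousAt (fun b : ℝ => b⁻¹) a := continuousAt_inv₀ ha.ne'
  obtain ⟨T₂, hT₂, bound₂⟩ := exists_integrable_bound_kernelMoment μ 2 ha
    (c := fun b => b⁻¹ ^ 4 / 2 + 5 / 2 * b⁻¹ ^ 3) (by fun_prop)
  obtain ⟨T₄, hT₄, bound₄⟩ := exists_integrable_bound_kernelMoment μ 4 ha
    (c := fun b => b⁻¹ ^ 4 / 2) (by fun_prop)
  obtain ⟨T₆, hT₆, bound₆⟩ := exists_integrable_bound_kernelMoment μ 6 ha
    (c := fun b => b⁻¹ ^ 4 / 2) (by fun_prop)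
  refine ⟨fun y => T₂ y + T₄ y + T₆ y, (hT₂.add hT₄).add hT₆, ?_⟩
  filter_upwards [bound₂, bound₄, bound₆, lt_mem_nhds ha] with b h₂ h₄ h₆ hb y
  exact (abs_fisherDensityDeriv_le μ hb y).trans (add_le_add_three
    ((le_abs_self _).trans (h₂ y)) ((le_abs_self _).trans (h₄ y)) ((le_abs_self _).trans (h₆ y)))

lemma integrable_kernelMoment_zero_mul {g : ℝ → ℝ} {C : ℝ} (hb : 0 < b) (hg : Continuous g)
    (hg_le : ∀ y, |g y| ≤ C * (1 + condMoment μ 2 b y + condMoment μ 4 b y)) :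
    Integrable (fun y => kernelMoment μ 0 b y * g y) := by
  refine ((((integrable_kernelMoment μ 0 hb).fun_add (integrable_kernelMoment μ 2 hb)).fun_add
    (integrable_kernelMoment μ 4 hb)).const_mul C).mono'
    ((continuous_kernelMoment μ 0 hb).mul hg).aestronglyMeasurable (.of_forall fun y => ?_)
  have hm := kernelMoment_zero_pos μ hb y
  rw [norm_mul, Real.norm_of_nonneg hm.le, Real.norm_eq_abs,
    kernelMoment_eq_mul_condMoment μ 2 hb, kernelMoment_eq_mul_condMoment μ 4 hb]
  linarith [mul_le_mul_of_nonneg_left (hg_le y) hm.le]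

lemma integrable_fisherDensity (hb : 0 < b) : Integrable (fisherDensity μ b) := by
  refine integrable_kernelMoment_zero_mul μ hb (C := b⁻¹ ^ 2)
    (((continuous_condMoment μ 1 hb).const_mul _).pow 2) fun y => ?_
  have four_nonneg : 0 ≤ condMoment μ 4 b y := (sq_nonneg _).trans (sq_condMoment_le μ 2 hb y)
  rw [abs_of_nonneg (sq_nonneg _), mul_pow]
  gcongr
  linarith [sq_condMoment_le μ 1 hb y]

lemma integrable_fisherFlux (hb : 0 < b) : Integrable (fisherFlux μ b) := by
  have cont_one := continuous_condMoment μ 1 hb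
  have cont_two := continuous_condMoment μ 2 hb
  refine integrable_kernelMoment_zero_mul μ hb (C := b⁻¹ ^ 2 + b⁻¹ ^ 3) (by fun_prop) fun y => ?_
  have sq_one : condMoment μ 1 b y ^ 2 ≤ condMoment μ 2 b y := sq_condMoment_le μ 1 hb y
  have sq_two : condMoment μ 2 b y ^ 2 ≤ condMoment μ 4 b y := sq_condMoment_le μ 2 hb y
  generalize condMoment μ 1 b y = r₁ at *
  generalize condMoment μ 2 b y = r₂ at *
  generalize condMoment μ 4 b y = r₄ at *
  have linear_le : |r₁| ≤ 1 + r₂ + r₄ := by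
    rw [abs_le]; constructor <;> nlinarith [sq_nonneg (r₁ - 1), sq_nonneg (r₁ + 1)]
  have cubic_le : |r₁ ^ 3 / 2 - r₁ * r₂| ≤ 1 + r₂ + r₄ := by
    have sq_le : (r₂ - r₁ ^ 2 / 2) ^ 2 ≤ r₄ := by nlinarith [sq_nonneg r₁]
    rw [abs_le]
    constructor <;>
      nlinarith [sq_nonneg (r₁ - (r₂ - r₁ ^ 2 / 2)), sq_nonneg (r₁ + (r₂ - r₁ ^ 2 / 2))]
  calc |b⁻¹ ^ 2 * r₁ - b⁻¹ ^ 3 * (r₁ * r₂) + b⁻¹ ^ 3 * r₁ ^ 3 / 2|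
    _ = |b⁻¹ ^ 2 * r₁ + b⁻¹ ^ 3 * (r₁ ^ 3 / 2 - r₁ * r₂)| := by congr 1; ring
    _ ≤ b⁻¹ ^ 2 * |r₁| + b⁻¹ ^ 3 * |r₁ ^ 3 / 2 - r₁ * r₂| := by
        refine (abs_add_le _ _).trans_eq ?_
        rw [abs_mul, abs_mul, abs_of_pos (by positivity : 0 < b⁻¹ ^ 2),
          abs_of_pos (by positivity : 0 < b⁻¹ ^ 3)]
    _ ≤ b⁻¹ ^ 2 * (1 + r₂ + r₄) + b⁻¹ ^ 3 * (1 + r₂ + r₄) := by gcongr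
    _ = _ := by ring

lemma integrable_fisherDissipation (hb : 0 < b) : Integrable (fisherDissipation μ b) := by
  have cont_one := continuous_condMoment μ 1 hb
  have cont_two := continuous_condMoment μ 2 hb
  refine integrable_kernelMoment_zero_mul μ hb (C := 2 * (b⁻¹ ^ 2 + b⁻¹ ^ 4)) (by fun_prop)
    fun y => ?_
  have sq_one : condMoment μ 1 b y ^ 2 ≤ condMoment μ 2 b y := sq_condMoment_le μ 1 hb y
  have sq_two : condMoment μ 2 b y ^ 2 ≤ condMoment μ 4 b y := sq_condMoment_le μ 2 hb y
  generalize condMoment μ 1 b y = r₁ at *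
  generalize condMoment μ 2 b y = r₂ at *
  generalize condMoment μ 4 b y = r₄ at *
  have sq_variance_le : (r₂ - r₁ ^ 2) ^ 2 ≤ r₄ := by nlinarith [sq_nonneg r₁]
  rw [abs_of_nonneg (sq_nonneg _)]
  calc (b⁻¹ ^ 2 * (r₂ - r₁ ^ 2) - b⁻¹) ^ 2
    _ ≤ 2 * (b⁻¹ ^ 2 + b⁻¹ ^ 4 * (r₂ - r₁ ^ 2) ^ 2) := by
        linarith [sq_nonneg (b⁻¹ ^ 2 * (r₂ - r₁ ^ 2) + b⁻¹)]
    _ ≤ 2 * (b⁻¹ ^ 2 * (1 + r₂ + r₄) + b⁻¹ ^ 4 * (1 + r₂ + r₄)) := by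
        gcongr
        · exact le_mul_of_one_le_right (by positivity) (by nlinarith [sq_nonneg r₁])
        · nlinarith [sq_nonneg r₁]
    _ = _ := by ring

lemma continuous_fisherDensityDeriv (hb : 0 < b) : Continuous (fisherDensityDeriv μ b) := by
  have cont_zero := continuous_kernelMoment μ 0 hb
  have cont_one := continuous_condMoment μ 1 hb
  have cont_two := continuous_condMoment μ 2 hb
  have cont_three := continuous_condMoment μ 3 hb
  unfold fisherDensityDeriv
  fun_prop

lemma integrable_fisherDensityDeriv (hb : 0 < b) : Integrable (fisherDensityDeriv μ b) := by
  obtain ⟨T, hT, bound⟩ := exists_integrable_bound_fisherDensityDeriv μ hb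
  exact hT.mono' (continuous_fisherDensityDeriv μ hb).aestronglyMeasurable
    (.of_forall bound.self_of_nhds)

lemma hasDerivAt_integral_fisherDensity {a : ℝ} (ha : 0 < a) :
    HasDerivAt (fun b => ∫ y, fisherDensity μ b y) (∫ y, fisherDensityDeriv μ a y) a := by
  obtain ⟨T, hT, bound⟩ := exists_integrable_bound_fisherDensityDeriv μ ha
  exact (hasDerivAt_integral_of_dominated_loc_of_deriv_le (bound.and (lt_mem_nhds ha))
    ((lt_mem_nhds ha).mono fun b hb => (integrable_fisherDensity μ hb).aestronglyMeasurable)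
    (integrable_fisherDensity μ ha)
    (integrable_fisherDensityDeriv μ ha).aestronglyMeasurable
    (.of_forall fun y b hb => hb.1 y) hT
    (.of_forall fun y b hb => hasDerivAt_fisherDensity μ hb.2 y)).2

lemma integral_fisherDensityDeriv (hb : 0 < b) :
    ∫ y, fisherDensityDeriv μ b y = -∫ y, fisherDissipation μ b y := by
  have deriv_int := integrable_fisherDensityDeriv μ hb
  have dissipation_int := integrable_fisherDissipation μ hb
  have integral_divergence := integral_eq_zero_of_hasDerivAt_of_integrable
    (hasDerivAt_fisherFlux μ hb) (deriv_int.fun_add dissipation_int) (integrable_fisherFlux μ hb)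
  rw [integral_add deriv_int dissipation_int] at integral_divergence
  exact eq_neg_of_add_eq_zero_left integral_divergence

end FisherInformation

theorem fisher_information_derivative_general
    (μ : Measure ℝ) [IsFiniteMeasure μ] [NeZero μ]
    (fY : ℝ → ℝ → ℝ)
    (hfY : ∀ a, 0 < a → ∀ y, fY a y =
      ∫ x, (√(2 * Real.pi * a))⁻¹ * Real.exp (-(y - x) ^ 2 / (2 * a)) ∂μ)
    (J : ℝ → ℝ)
    (hJ : ∀ a, 0 < a → J a =
      ∫ y, fY a y * (deriv (fun y' => Real.log (fY a y')) y) ^ 2) :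
    ∀ a, 0 < a → HasDerivAt J
      (-∫ y, fY a y *
        (deriv (fun y' => deriv (fun y'' => Real.log (fY a y'')) y') y) ^ 2)
      a := by
  intro a ha
  have fY_eq {b : ℝ} (hb : 0 < b) : fY b = kernelMoment μ 0 b := by
    ext y
    simp only [hfY b hb, kernelMoment, gaussianKernel, pow_zero, one_mul]
  have J_eq {b : ℝ} (hb : 0 < b) : J b = ∫ y, fisherDensity μ b y := by
    simp only [hJ b hb, fY_eq hb, deriv_log_kernelMoment_zero μ hb, fisherDensity, neg_mul, neg_sq]
  have dissipation_eq : ∫ y, fY a y *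
      (deriv (fun y' => deriv (fun y'' => Real.log (fY a y'')) y') y) ^ 2 =
        ∫ y, fisherDissipation μ a y := by
    simp only [fY_eq ha, deriv_deriv_log_kernelMoment_zero μ ha, fisherDissipation]
  rw [dissipation_eq, ← integral_fisherDensityDeriv μ ha]
  exact (hasDerivAt_integral_fisherDensity μ ha).congr_of_eventuallyEq
    ((lt_mem_nhds ha).mono fun b hb => J_eq hb)

/-- **Derivative of the Fisher information.** For the additive Gaussian noise
channel, the Fisher information `J(a)` of the output is differentiable in
`a > 0` and `d/da J(a) = −E_Y[(∂/∂y S_Y(y;a))²]`. -/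
theorem fisher_information_derivative
    (fX : ℝ → ℝ)
    (hfX_nonneg : ∀ x, 0 ≤ fX x)
    (hfX_prob : (∫ x, fX x) = 1)
    (hfX_mom : Integrable (fun x => x ^ 2 * fX x))
    (fY : ℝ → ℝ → ℝ)
    (hfY : ∀ a, 0 < a → ∀ y, fY a y =
      ∫ x, fX x * ((Real.sqrt (2 * Real.pi * a))⁻¹ *
        Real.exp (-(y - x) ^ 2 / (2 * a))))
    (J : ℝ → ℝ)
    (hJ : ∀ a, 0 < a → J a =
      ∫ y, fY a y * (deriv (fun y' => Real.log (fY a y')) y) ^ 2) :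
    ∀ a, 0 < a → HasDerivAt J
      (-∫ y, fY a y *
        (deriv (fun y' => deriv (fun y'' => Real.log (fY a y'')) y') y) ^ 2)
      a := by
  have law_prob := isProbabilityMeasure_withDensity_ofReal (.of_forall hfX_nonneg) hfX_prob
  have fX_meas : AEMeasurable fX :=
    (Integrable.of_integral_ne_zero (by simp [hfX_prob])).aestronglyMeasurable.aemeasurable
  refine fisher_information_derivative_general
    (volume.withDensity fun x => ENNReal.ofReal (fX x)) fY (fun a ha y => ?_) J hJ
  rw [integral_withDensity_ofReal (.of_forall hfX_nonneg) fX_meas, hfY a ha]
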